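/- Let m and n be positive even integers. Then the number N(m,n) of perfect matchings of the m-by-n grid graph satisfies N(m,n) = ∏_{j=1}^{m/2} ∏_{k=1}^{n/2} (4 cos²(πj/(m+1)) + 4 cos²(πk/(n+1))). -/

import Mathlib

open Real

/-- The m-by-n grid graph on vertex set `Fin m × Fin n`: two vertices are
adjacent iff they differ by exactly 1 in one coordinate and agree in the other. -/
def gridGraph (m n : ℕ) : SimpleGraph (Fin m × Fin n) :=
  SimpleGraph.fromRel (fun p q =>
    (p.1 = q.1 ∧ p.2.val + 1 = q.2.val) ∨ (p.2 = q.2 ∧ p.1.val + 1 = q.1.val))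

/-- The number of perfect matchings of a graph. -/
noncomputable def numPerfectMatchings {V : Type*} (G : SimpleGraph V) : ℕ :=
  {M : G.Subgraph | M.IsPerfectMatching}.ncard

/-!
Number the vertices of the grid row by row and draw the edges of a perfect matching as arcs above a
line. Crossing numbers of such arcs relate the sign of the permutation underlying the matching to
signs attached to its edges one at a time: an arc of length `1` meets no other arc, while all arcs
starting before a long arc also end before it, which determines the parity of its crossings with
the later arcs. With these signs as entries, every perfect matching contributes the same sign to
the determinant of the biadjacency matrix, and the skew-symmetric signed adjacency matrix `K` of an
`m × n` grid with `n` even satisfies `N(m, n) ^ 4 = det (K * K)`.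

Here `K = 1 ⊗ Q + Q ⊗ D`, where `Q` is the signed adjacency matrix of a path and `D` is a diagonal
matrix of alternating signs anticommuting with `Q`. So `K * K = 1 ⊗ Q² + Q² ⊗ 1`, and it is
diagonalised by products of sine waves. Its eigenvalues are invariant under the reflections
`j ↦ m + 1 - j` and `k ↦ n + 1 - k`; folding the product over both leaves the fourth power of a
product over one quarter of the index set.
-/

namespace Kasteleyn

open Finset Matrix SimpleGraph
open scoped Kronecker

section PerfectMatchings

variable {V W ι κ : Type*}

lemma numPerfectMatchings_congr {G : SimpleGraph V} {H : SimpleGraph W} (f : G ≃g H) :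
    numPerfectMatchings G = numPerfectMatchings H := by
  have map_map_symm (M : H.Subgraph) :
      (M.map (f.symm : H →g G)).map (f : G →g H) = M := by
    rw [← Subgraph.map_comp]
    convert Subgraph.map_id M
    ext; simp
  have map_symm_map (M : G.Subgraph) :
      (M.map (f : G →g H)).map (f.symm : H →g G) = M := by
    rw [← Subgraph.map_comp]
    convert Subgraph.map_id M
    ext; simp
  have isPerfectMatching_map (M : G.Subgraph) (hM : M.IsPerfectMatching) :
      (M.map (f : G →g H)).IsPerfectMatching :=
    ⟨hM.1.map f.toHom f.injective, fun w ↦ ⟨f.symm w, hM.2 _, f.apply_symm_apply w⟩⟩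
  refine Set.ncard_congr (fun M _ ↦ M.map (f : G →g H)) isPerfectMatching_map
    (fun M M' _ _ h ↦ ?_) fun M hM ↦ ⟨M.map (f.symm : H →g G), ?_, map_map_symm M⟩
  · rw [← map_symm_map M, h, map_symm_map]
  · exact ⟨hM.1.map f.symm.toHom f.symm.injective,
      fun v ↦ ⟨f v, hM.2 _, f.symm_apply_apply v⟩⟩

lemma numPerfectMatchings_eq_zero_of_odd_card [Fintype V] (G : SimpleGraph V)
    (hV : Odd (Fintype.card V)) : numPerfectMatchings G = 0 := by
  have isEmpty : {M : G.Subgraph | M.IsPerfectMatching} = ∅ :=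
    Set.eq_empty_of_forall_notMem fun M hM ↦ Nat.not_even_iff_odd.2 hV hM.even_card
  rw [numPerfectMatchings, isEmpty, Set.ncard_empty]

/-- The perfect matching of a graph on `ι ⊕ κ` that joins each `i : ι` to `σ i : κ`. -/
def equivMatching (G : SimpleGraph (ι ⊕ κ)) (σ : ι ≃ κ)
    (hσ : ∀ i, G.Adj (Sum.inl i) (Sum.inr (σ i))) : G.Subgraph where
  verts := Set.univ
  Adj
    | Sum.inl i, Sum.inr j => σ i = j
    | Sum.inr j, Sum.inl i => σ i = j
    | _, _ => False
  adj_sub {v w} h := by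
    rcases v with i | j <;> rcases w with i' | j' <;> cases h
    exacts [hσ i, (hσ i').symm]
  edge_vert _ := Set.mem_univ _
  symm := ⟨by rintro (_ | _) (_ | _) h <;> exact h⟩

lemma equivMatching_isPerfectMatching (G : SimpleGraph (ι ⊕ κ)) (σ : ι ≃ κ)
    (hσ : ∀ i, G.Adj (Sum.inl i) (Sum.inr (σ i))) :
    (equivMatching G σ hσ).IsPerfectMatching := by
  rw [Subgraph.isPerfectMatching_iff]
  rintro (i | j)
  · refine ⟨Sum.inr (σ i), rfl, ?_⟩
    rintro (_ | _) h <;> cases h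
    rfl
  · refine ⟨Sum.inl (σ.symm j), σ.apply_symm_apply j, ?_⟩
    rintro (_ | _) h <;> cases h
    simp

lemma exists_equivMatching_eq {G : SimpleGraph (ι ⊕ κ)}
    (hl : ∀ i j, ¬ G.Adj (Sum.inl i) (Sum.inl j)) (hr : ∀ i j, ¬ G.Adj (Sum.inr i) (Sum.inr j))
    {M : G.Subgraph} (hM : M.IsPerfectMatching) : ∃ σ hσ, equivMatching G σ hσ = M := by
  have left_matched (i : ι) : ∃ j, M.Adj (Sum.inl i) (Sum.inr j) := by
    obtain ⟨i' | j, h, -⟩ := Subgraph.isPerfectMatching_iff.1 hM (Sum.inl i)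
    · exact absurd h.adj_sub (hl _ _)
    · exact ⟨j, h⟩
  have right_matched (j : κ) : ∃ i, M.Adj (Sum.inl i) (Sum.inr j) := by
    obtain ⟨i | j', h, -⟩ := Subgraph.isPerfectMatching_iff.1 hM (Sum.inr j)
    · exact ⟨i, h.symm⟩
    · exact absurd h.adj_sub (hr _ _)
  choose f hf using left_matched
  choose g hg using right_matched
  have eq_f {i j} (h : M.Adj (Sum.inl i) (Sum.inr j)) : f i = j :=
    Sum.inr_injective (hM.1.eq_of_adj_left (hf i) h)
  have eq_g {i j} (h : M.Adj (Sum.inl i) (Sum.inr j)) : g j = i :=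
    Sum.inl_injective (hM.1.eq_of_adj_right (hg j) h)
  refine ⟨⟨f, g, fun i ↦ eq_g (hf i), fun j ↦ eq_f (hg j)⟩, fun i ↦ (hf i).adj_sub, ?_⟩
  refine Subgraph.ext hM.2.verts_eq_univ.symm ?_
  ext (i | j) (i' | j')
  · exact iff_of_false id fun h ↦ hl _ _ h.adj_sub
  · exact ⟨fun h ↦ h ▸ hf i, eq_f⟩
  · exact ⟨fun h ↦ h ▸ (hf i').symm, fun h ↦ eq_f h.symm⟩
  · exact iff_of_false id fun h ↦ hr _ _ h.adj_sub

lemma numPerfectMatchings_eq_ncard_equiv {G : SimpleGraph (ι ⊕ κ)}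
    (hl : ∀ i j, ¬ G.Adj (Sum.inl i) (Sum.inl j)) (hr : ∀ i j, ¬ G.Adj (Sum.inr i) (Sum.inr j)) :
    numPerfectMatchings G = {σ : ι ≃ κ | ∀ i, G.Adj (Sum.inl i) (Sum.inr (σ i))}.ncard := by
  refine (Set.ncard_congr (fun σ hσ ↦ equivMatching G σ hσ)
    (fun σ hσ ↦ equivMatching_isPerfectMatching G σ hσ) ?_ ?_).symm
  · intro σ τ hσ hτ h
    ext i
    have hi : (equivMatching G τ hτ).Adj (Sum.inl i) (Sum.inr (σ i)) := by
      rw [← h]; exact rfl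
    exact Eq.symm hi
  · intro M hM
    exact exists_equivMatching_eq hl hr hM

lemma numPerfectMatchings_eq_ncard_equiv_of_bipartition {G : SimpleGraph V} (e : ι ⊕ κ ≃ V)
    (hl : ∀ i j, ¬ G.Adj (e (Sum.inl i)) (e (Sum.inl j)))
    (hr : ∀ i j, ¬ G.Adj (e (Sum.inr i)) (e (Sum.inr j))) :
    numPerfectMatchings G =
      {σ : ι ≃ κ | ∀ i, G.Adj (e (Sum.inl i)) (e (Sum.inr (σ i)))}.ncard := by
  rw [← numPerfectMatchings_congr (Iso.comap e G)]
  exact numPerfectMatchings_eq_ncard_equiv hl hr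

end PerfectMatchings

section Crossings

variable {α : Type*} [LinearOrder α]

/-- The sign of `b - a`, for elements of a linear order that need not have differences. -/
def orderSign (a b : α) : ℤ :=
  if a < b then 1 else if b < a then -1 else 0

lemma orderSign_of_lt {a b : α} (h : a < b) : orderSign a b = 1 := if_pos h

lemma orderSign_of_gt {a b : α} (h : b < a) : orderSign a b = -1 := by
  rw [orderSign, if_neg h.not_gt, if_pos h]

lemma orderSign_antisymm (a b : α) : orderSign a b = -orderSign b a := by
  rcases lt_trichotomy a b with h | rfl | h
  · rw [orderSign_of_lt h, orderSign_of_gt h, neg_neg]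
  · simp [orderSign]
  · rw [orderSign_of_lt h, orderSign_of_gt h]

lemma isUnit_orderSign {a b : α} (h : a ≠ b) : IsUnit (orderSign a b) := by
  rcases h.lt_or_gt with h | h
  · simp [orderSign_of_lt h]
  · simp [orderSign_of_gt h]

/-- The crossing sign of the arcs `{a, b}` and `{c, d}`, drawn above a line: it is `-1` if exactly
one of `c` and `d` lies between `a` and `b`, and `1` otherwise, provided the arcs share no end. -/
def crossingSign (a b c d : α) : ℤ :=
  orderSign a c * orderSign a d * (orderSign b c * orderSign b d)

lemma crossingSign_comm_left (a b c d : α) : crossingSign b a c d = crossingSign a b c d :=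
  mul_comm _ _

lemma crossingSign_comm_right (a b c d : α) : crossingSign a b d c = crossingSign a b c d := by
  rw [crossingSign, crossingSign, mul_comm (orderSign a d), mul_comm (orderSign b d)]

lemma crossingSign_swap (a b c d : α) : crossingSign c d a b = crossingSign a b c d := by
  rw [crossingSign, crossingSign, orderSign_antisymm c a, orderSign_antisymm c b,
    orderSign_antisymm d a, orderSign_antisymm d b]
  ring

/-- Kasteleyn's sign rule: apart from a factor independent of the permutation, the sign of a
permutation `σ` counts the crossings of the arcs from `x i` to `w (σ i)` and those arcs among them
that point to the left. -/
lemma sign_mul_prod_orderSign_mul_prod_crossingSign {k : ℕ} (x w : Fin k → α)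
    (σ : Equiv.Perm (Fin k)) :
    (Equiv.Perm.sign σ : ℤ) * (∏ i, orderSign (x i) (w (σ i))) *
        ∏ i, ∏ j ∈ Ioi i, crossingSign (x i) (w (σ i)) (x j) (w (σ j)) =
      (∏ i, ∏ j ∈ Ioi i, orderSign (x j) (x i)) * (∏ i, ∏ j ∈ Ioi i, orderSign (w i) (w j)) *
        ∏ i, ∏ j, orderSign (x i) (w j) := by
  have prod_right : ∏ i, ∏ j ∈ Ioi i, orderSign (w (σ i)) (w (σ j)) =
      Equiv.Perm.sign σ * ∏ i, ∏ j ∈ Ioi i, orderSign (w i) (w j) :=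
    σ.prod_Ioi_comp_eq_sign_mul_prod fun i j ↦ orderSign_antisymm (w i) (w j)
  have prod_mixed : (∏ i, orderSign (x i) (w (σ i))) *
      (∏ i, ∏ j ∈ Ioi i, orderSign (x j) (w (σ i)) * orderSign (x i) (w (σ j))) =
        ∏ i, ∏ j, orderSign (x i) (w j) := by
    calc
      _ = ∏ i, ∏ j, orderSign (x j) (w (σ i)) := by
        rw [prod_prod_Ioi_mul_eq_prod_prod_off_diag fun j i ↦ orderSign (x j) (w (σ i)),
          ← prod_mul_distrib]
        exact prod_congr rfl fun i _ ↦
          (Fintype.prod_eq_mul_prod_compl i fun j ↦ orderSign (x j) (w (σ i))).symm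
      _ = ∏ j, ∏ i, orderSign (x j) (w (σ i)) := prod_comm
      _ = ∏ j, ∏ i, orderSign (x j) (w i) :=
        prod_congr rfl fun j _ ↦ Equiv.prod_comp σ fun i ↦ orderSign (x j) (w i)
  have factor (i j : Fin k) : crossingSign (x i) (w (σ i)) (x j) (w (σ j)) =
      orderSign (x j) (x i) * orderSign (w (σ i)) (w (σ j)) *
        (orderSign (x j) (w (σ i)) * orderSign (x i) (w (σ j))) := by
    rw [crossingSign, orderSign_antisymm (x i) (x j), orderSign_antisymm (w (σ i)) (x j)]
    ring
  simp only [factor, prod_mul_distrib]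
  simp only [prod_mul_distrib] at prod_mixed
  rw [prod_right, ← prod_mixed]
  linear_combination (∏ i, orderSign (x i) (w (σ i))) *
    (∏ i, ∏ j ∈ Ioi i, orderSign (x j) (x i)) * (∏ i, ∏ j ∈ Ioi i, orderSign (w i) (w j)) *
    (∏ i, ∏ j ∈ Ioi i, orderSign (x j) (w (σ i))) *
    (∏ i, ∏ j ∈ Ioi i, orderSign (x i) (w (σ j))) * (Int.units_coe_mul_self (Equiv.Perm.sign σ))

lemma prod_prod_Ioi_eq_prod_prod_lt {ι M : Type*} [LinearOrder ι] [Fintype ι]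
    [LocallyFiniteOrderTop ι] [CommMonoid M] {c : ι → ι → M} (hc : ∀ i j, c i j = c j i)
    {a : ι → α} (ha : Function.Injective a) :
    ∏ i, ∏ j ∈ Ioi i, c i j = ∏ i, ∏ j with a i < a j, c i j := by
  rw [prod_sigma', prod_sigma']
  refine prod_nbij' (fun p ↦ if a p.1 < a p.2 then p else ⟨p.2, p.1⟩)
    (fun p ↦ if p.1 < p.2 then p else ⟨p.2, p.1⟩) ?_ ?_ ?_ ?_ ?_ <;>
  grind [ha.eq_iff]

end Crossings

section ArcDiagrams

variable {ι : Type*} {N : ℕ} (e : ι ⊕ ι ≃ Fin N)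

/-- The left end of the `i`-th arc of the arc diagram on `Fin N` that joins `e (inl i)` to
`e (inr i)` for every `i`. -/
def arcStart (i : ι) : Fin N := min (e (Sum.inl i)) (e (Sum.inr i))

/-- The right end of the `i`-th arc of the arc diagram on `Fin N` that joins `e (inl i)` to
`e (inr i)` for every `i`. -/
def arcEnd (i : ι) : Fin N := max (e (Sum.inl i)) (e (Sum.inr i))

/-- The crossing sign of an arc with all arcs starting further to the right, in an arc diagram
whose arcs all have length `1` or a common length `L`. -/
def arcWeight (a b : ℕ) : ℤ := if a.dist b = 1 then 1 else (-1) ^ (max a b + 1)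

lemma arcStart_lt_arcEnd (i : ι) : arcStart e i < arcEnd e i :=
  min_lt_max.2 (e.injective.ne Sum.inl_ne_inr)

lemma arcStart_injective : Function.Injective (arcStart e) := by
  intro i j h
  rcases min_choice (e (Sum.inl i)) (e (Sum.inr i)) with hi | hi <;>
    rcases min_choice (e (Sum.inl j)) (e (Sum.inr j)) with hj | hj <;>
    simp_all [arcStart]

lemma arcEnd_injective : Function.Injective (arcEnd e) := by
  intro i j h
  rcases max_choice (e (Sum.inl i)) (e (Sum.inr i)) with hi | hi <;>
    rcases max_choice (e (Sum.inl j)) (e (Sum.inr j)) with hj | hj <;>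
    simp_all [arcEnd]

lemma arcEnd_ne_arcStart (i j : ι) : arcEnd e i ≠ arcStart e j := by
  rcases eq_or_ne i j with rfl | hij
  · exact (arcStart_lt_arcEnd e i).ne'
  · rcases max_choice (e (Sum.inl i)) (e (Sum.inr i)) with hi | hi <;>
      rcases min_choice (e (Sum.inl j)) (e (Sum.inr j)) with hj | hj <;>
      simp [arcStart, arcEnd, hi, hj, hij]

lemma prod_arcStart_mul_arcEnd [Fintype ι] {M : Type*} [CommMonoid M] (f : Fin N → M) :
    ∏ i, f (arcStart e i) * f (arcEnd e i) = ∏ z, f z := by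
  simp_rw [arcStart, arcEnd, fn_min_mul_fn_max, prod_mul_distrib, ← e.prod_comp f,
    Fintype.prod_sum_type]

lemma crossingSign_arcStart_arcEnd (i j : ι) :
    crossingSign (arcStart e i) (arcEnd e i) (arcStart e j) (arcEnd e j) =
      crossingSign (e (Sum.inl i)) (e (Sum.inr i)) (e (Sum.inl j)) (e (Sum.inr j)) := by
  rcases le_total (e (Sum.inl i)) (e (Sum.inr i)) with hi | hi <;>
    rcases le_total (e (Sum.inl j)) (e (Sum.inr j)) with hj | hj <;>
    simp [arcStart, arcEnd, hi, hj, crossingSign_comm_left, crossingSign_comm_right]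

lemma dist_arcStart_arcEnd (i : ι) :
    Nat.dist (arcStart e i) (arcEnd e i) = Nat.dist (e (Sum.inl i)) (e (Sum.inr i)) := by
  rcases le_total (e (Sum.inl i)) (e (Sum.inr i)) with hi | hi <;>
    simp [arcStart, arcEnd, hi, Nat.dist_comm]

lemma arcWeight_arcStart_arcEnd (i : ι) :
    arcWeight (arcStart e i) (arcEnd e i) = arcWeight (e (Sum.inl i)) (e (Sum.inr i)) := by
  rcases le_total (e (Sum.inl i)) (e (Sum.inr i)) with hi | hi <;>
    simp [arcStart, arcEnd, hi, arcWeight, Nat.dist_comm]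

lemma prod_ite_lt_neg_one (b : Fin N) :
    ∏ z : Fin N, (if z < b then -1 else 1 : ℤ) = (-1) ^ (b : ℕ) := by
  rw [prod_ite, prod_const, prod_const_one, mul_one, filter_gt_eq_Iio, Fin.card_Iio]

lemma crossingSign_of_lt {α : Type*} [LinearOrder α] {a b c d : α} (hac : a < c) (had : a < d)
    (hbc : b ≠ c) (hbd : b ≠ d) : crossingSign a b c d =
      (if c < b then -1 else 1) * (if d < b then -1 else 1) := by
  have orderSign_eq {x : α} (hx : b ≠ x) : orderSign b x = if x < b then -1 else 1 := by
    rcases hx.lt_or_gt with h | h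
    · rw [orderSign_of_lt h, if_neg h.not_gt]
    · rw [orderSign_of_gt h, if_pos h]
  rw [crossingSign, orderSign_of_lt hac, orderSign_of_lt had, orderSign_eq hbc, orderSign_eq hbd,
    one_mul, one_mul]

lemma crossingSign_arcStart_of_lt {i j : ι} (hij : arcStart e i < arcStart e j) :
    crossingSign (arcStart e i) (arcEnd e i) (arcStart e j) (arcEnd e j) =
      (if arcStart e j < arcEnd e i then -1 else 1) * (if arcEnd e j < arcEnd e i then -1 else 1) :=
  crossingSign_of_lt hij (hij.trans (arcStart_lt_arcEnd e j)) (arcEnd_ne_arcStart e i j)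
    fun h ↦ hij.ne (congrArg _ (arcEnd_injective e h))

variable [Fintype ι]

/- All arcs starting before a long arc also end before it does, so the parity of its crossings
with the later arcs is that of the number of points to the left of its right end. -/
lemma prod_crossingSign_of_later {L : ℕ}
    (hL : ∀ j, Nat.dist (e (Sum.inl j)) (e (Sum.inr j)) = 1 ∨
      Nat.dist (e (Sum.inl j)) (e (Sum.inr j)) = L) (i : ι) :
    ∏ j with arcStart e i < arcStart e j,
        crossingSign (arcStart e i) (arcEnd e i) (arcStart e j) (arcEnd e j) =
      arcWeight (arcStart e i) (arcEnd e i) := by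
  have start_lt_end (j : ι) : (arcStart e j : ℕ) < arcEnd e j := arcStart_lt_arcEnd e j
  simp only [← dist_arcStart_arcEnd, fun j ↦ Nat.dist_eq_sub_of_le (start_lt_end j).le] at hL
  rw [prod_congr rfl fun j hj ↦ crossingSign_arcStart_of_lt e (mem_filter.1 hj).2, arcWeight,
    Nat.dist_eq_sub_of_le (start_lt_end i).le, max_eq_right (start_lt_end i).le]
  split_ifs with short
  · refine prod_eq_one fun j hj ↦ ?_
    have later : (arcStart e i : ℕ) < arcStart e j := (mem_filter.1 hj).2
    have := start_lt_end j
    rw [if_neg (by lia), if_neg (by lia), mul_one]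
  · have prod_not_later : ∏ j with ¬ arcStart e i < arcStart e j,
        (if arcStart e j < arcEnd e i then -1 else 1) * (if arcEnd e j < arcEnd e i then -1 else 1)
          = (-1 : ℤ) := by
      refine (prod_eq_single i (fun j hj hji ↦ ?_) (by simp)).trans (by simp [arcStart_lt_arcEnd])
      have earlier : arcStart e j < arcStart e i :=
        lt_of_le_of_ne (not_lt.1 (mem_filter.1 hj).2) ((arcStart_injective e).ne hji)
      have := start_lt_end i
      have := hL i
      have := hL j
      rw [if_pos (by lia), if_pos (by lia), neg_one_mul, neg_neg]
    have prod_all := prod_arcStart_mul_arcEnd e fun z ↦ if z < arcEnd e i then (-1 : ℤ) else 1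
    rw [prod_ite_lt_neg_one, ← prod_filter_mul_prod_filter_not univ
      (fun j ↦ arcStart e i < arcStart e j), prod_not_later] at prod_all
    rw [pow_succ, ← prod_all, mul_assoc, neg_one_mul, neg_neg, mul_one]

end ArcDiagrams

section KasteleynSigns

variable {k N : ℕ} (e : Fin k ⊕ Fin k ≃ Fin N)

/-- The sign with which every perfect matching contributes to the determinant of Kasteleyn's
biadjacency matrix. -/
def kasteleynSign : ℤ :=
  (∏ i, ∏ j ∈ Ioi i, orderSign (e (Sum.inl j)) (e (Sum.inl i))) *
    (∏ i, ∏ j ∈ Ioi i, orderSign (e (Sum.inr i)) (e (Sum.inr j))) *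
      ∏ i, ∏ j, orderSign (e (Sum.inl i)) (e (Sum.inr j))

lemma isUnit_kasteleynSign : IsUnit (kasteleynSign e) := by
  simp only [kasteleynSign, IsUnit.mul_iff, IsUnit.prod_iff, mem_univ, mem_Ioi, forall_const]
  refine ⟨⟨fun i j hij ↦ isUnit_orderSign ?_, fun i j hij ↦ isUnit_orderSign ?_⟩,
    fun i j ↦ isUnit_orderSign ?_⟩
  · simpa using hij.ne'
  · simpa using hij.ne
  · simp

/-- The entry of Kasteleyn's matrix at a pair of adjacent vertices with positions `a` and `b`. -/
def kasteleynWeight (a b : Fin N) : ℤ := orderSign a b * arcWeight a b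

lemma prod_prod_Ioi_crossingSign {L : ℕ}
    (hL : ∀ i, Nat.dist (e (Sum.inl i)) (e (Sum.inr i)) = 1 ∨
      Nat.dist (e (Sum.inl i)) (e (Sum.inr i)) = L) :
    ∏ i, ∏ j ∈ Ioi i,
        crossingSign (e (Sum.inl i)) (e (Sum.inr i)) (e (Sum.inl j)) (e (Sum.inr j)) =
      ∏ i, arcWeight (e (Sum.inl i)) (e (Sum.inr i)) := by
  simp_rw [← crossingSign_arcStart_arcEnd, ← arcWeight_arcStart_arcEnd,
    ← prod_crossingSign_of_later e hL]
  exact prod_prod_Ioi_eq_prod_prod_lt (fun i j ↦ crossingSign_swap _ _ _ _) (arcStart_injective e)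

lemma sign_mul_prod_kasteleynWeight {L : ℕ} {σ : Equiv.Perm (Fin k)}
    (hσ : ∀ i, Nat.dist (e (Sum.inl i)) (e (Sum.inr (σ i))) = 1 ∨
      Nat.dist (e (Sum.inl i)) (e (Sum.inr (σ i))) = L) :
    (Equiv.Perm.sign σ : ℤ) * ∏ i, kasteleynWeight (e (Sum.inl i)) (e (Sum.inr (σ i))) =
      kasteleynSign e := by
  have crossings := prod_prod_Ioi_crossingSign (((Equiv.refl _).sumCongr σ).trans e) hσ
  simp only [Equiv.trans_apply, Equiv.sumCongr_apply, Sum.map_inl, Sum.map_inr,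
    Equiv.refl_apply] at crossings
  simp_rw [kasteleynWeight, prod_mul_distrib]
  rw [← crossings, ← mul_assoc]
  exact sign_mul_prod_orderSign_mul_prod_crossingSign (fun i ↦ e (Sum.inl i))
    (fun j ↦ e (Sum.inr j)) σ

end KasteleynSigns

section KasteleynMatrix

variable {V : Type*} {k N : ℕ}

lemma kasteleynWeight_antisymm (a b : Fin N) : kasteleynWeight a b = -kasteleynWeight b a := by
  rw [kasteleynWeight, kasteleynWeight, orderSign_antisymm, arcWeight, arcWeight, Nat.dist_comm,
    max_comm, neg_mul]

/-- Kasteleyn's skew-symmetric signed adjacency matrix of a graph whose vertices are placed on a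
line by `pos`. -/
def kasteleynMatrix (G : SimpleGraph V) [DecidableRel G.Adj] (pos : V ≃ Fin N) : Matrix V V ℤ :=
  Matrix.of fun v w ↦ if G.Adj v w then kasteleynWeight (pos v) (pos w) else 0

variable {G : SimpleGraph V} [DecidableRel G.Adj] {pos : V ≃ Fin N}

lemma kasteleynMatrix_apply_of_adj {v w : V} (h : G.Adj v w) :
    kasteleynMatrix G pos v w = kasteleynWeight (pos v) (pos w) := if_pos h

lemma kasteleynMatrix_apply_of_not_adj {v w : V} (h : ¬ G.Adj v w) :
    kasteleynMatrix G pos v w = 0 := if_neg h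

lemma transpose_kasteleynMatrix : (kasteleynMatrix G pos)ᵀ = -kasteleynMatrix G pos := by
  ext v w
  by_cases h : G.Adj v w
  · rw [transpose_apply, neg_apply, kasteleynMatrix_apply_of_adj h,
      kasteleynMatrix_apply_of_adj h.symm, kasteleynWeight_antisymm]
  · rw [transpose_apply, neg_apply, kasteleynMatrix_apply_of_not_adj h,
      kasteleynMatrix_apply_of_not_adj (h ∘ Adj.symm), neg_zero]

lemma det_toBlocks₁₂_kasteleynMatrix {e : Fin k ⊕ Fin k ≃ V}
    (hl : ∀ i j, ¬ G.Adj (e (Sum.inl i)) (e (Sum.inl j)))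
    (hr : ∀ i j, ¬ G.Adj (e (Sum.inr i)) (e (Sum.inr j))) {L : ℕ}
    (hL : ∀ v w, G.Adj v w → Nat.dist (pos v) (pos w) = 1 ∨ Nat.dist (pos v) (pos w) = L) :
    ((kasteleynMatrix G pos).submatrix e e).toBlocks₁₂.det =
      kasteleynSign (e.trans pos) * numPerfectMatchings G := by
  classical
  have term (σ : Equiv.Perm (Fin k)) : (Equiv.Perm.sign σ : ℤ) *
      ∏ i, kasteleynMatrix G pos (e (Sum.inl i)) (e (Sum.inr (σ i))) =
        if ∀ i, G.Adj (e (Sum.inl i)) (e (Sum.inr (σ i))) then kasteleynSign (e.trans pos)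
        else 0 := by
    split_ifs with h
    · simp_rw [kasteleynMatrix_apply_of_adj (h _)]
      exact sign_mul_prod_kasteleynWeight (e.trans pos) fun i ↦ hL _ _ (h i)
    · obtain ⟨i, hi⟩ := not_forall.1 h
      refine mul_eq_zero_of_right _ (prod_eq_zero (mem_univ i) ?_)
      exact kasteleynMatrix_apply_of_not_adj hi
  rw [numPerfectMatchings_eq_ncard_equiv_of_bipartition e hl hr, Set.ncard_eq_toFinset_card',
    ← det_transpose, det_apply', Set.toFinset_ofPred, mul_comm, ← nsmul_eq_mul, ← sum_const,
    sum_filter]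
  exact sum_congr rfl fun σ _ ↦ term σ

lemma det_fromBlocks_zero_neg_transpose_mul_self {ι R : Type*} [Fintype ι] [DecidableEq ι]
    [CommRing R] (B : Matrix ι ι R) :
    (fromBlocks 0 B (-Bᵀ) 0 * fromBlocks 0 B (-Bᵀ) 0).det = B.det ^ 4 := by
  simp only [fromBlocks_multiply, Matrix.zero_mul, Matrix.mul_zero, zero_add, add_zero,
    det_fromBlocks_zero₂₁, det_mul, det_neg, det_transpose]
  have sq_neg_one_pow : ((-1 : R) ^ Fintype.card ι) ^ 2 = 1 := by
    rw [← pow_mul', Even.neg_one_pow (even_two_mul _)]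
  linear_combination B.det ^ 4 * sq_neg_one_pow

lemma numPerfectMatchings_pow_four_eq_det [Fintype V] [DecidableEq V] (e : Fin k ⊕ Fin k ≃ V)
    (hl : ∀ i j, ¬ G.Adj (e (Sum.inl i)) (e (Sum.inl j)))
    (hr : ∀ i j, ¬ G.Adj (e (Sum.inr i)) (e (Sum.inr j))) {L : ℕ}
    (hL : ∀ v w, G.Adj v w → Nat.dist (pos v) (pos w) = 1 ∨ Nat.dist (pos v) (pos w) = L) :
    (numPerfectMatchings G : ℤ) ^ 4 = (kasteleynMatrix G pos * kasteleynMatrix G pos).det := by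
  set K := kasteleynMatrix G pos
  set B := (K.submatrix e e).toBlocks₁₂
  have blocks : K.submatrix e e = fromBlocks 0 B (-Bᵀ) 0 := by
    rw [← fromBlocks_toBlocks (K.submatrix e e)]
    congr 1
    · ext i j
      exact kasteleynMatrix_apply_of_not_adj (hl i j)
    · ext i j
      exact congrFun₂ transpose_kasteleynMatrix _ _
    · ext i j
      exact kasteleynMatrix_apply_of_not_adj (hr i j)
  have unit_pow_four : kasteleynSign (e.trans pos) ^ 4 = 1 := by
    rcases Int.isUnit_iff.1 (isUnit_kasteleynSign (e.trans pos)) with h | h <;> rw [h] <;> rfl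
  rw [← det_submatrix_equiv_self e, ← submatrix_mul_equiv K K e e e, blocks,
    det_fromBlocks_zero_neg_transpose_mul_self, det_toBlocks₁₂_kasteleynMatrix hl hr hL, mul_pow,
    unit_pow_four, one_mul]

lemma exists_equiv_sum_of_swap [Finite V] (p : V → Prop) (f : V ≃ V) (hf : ∀ v, p (f v) ↔ ¬ p v) :
    ∃ (k : ℕ) (e : Fin k ⊕ Fin k ≃ V), (∀ i, p (e (Sum.inl i))) ∧ ∀ i, ¬ p (e (Sum.inr i)) := by
  classical
  let swap : {v // p v} ≃ {v // ¬ p v} := f.subtypeEquiv fun v ↦ by rw [hf, not_not]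
  let enum : Fin (Nat.card {v // p v}) ≃ {v // p v} := (Finite.equivFin _).symm
  exact ⟨_, (enum.sumCongr (enum.trans swap)).trans (Equiv.sumCompl p),
    fun i ↦ (enum i).2, fun i ↦ (swap (enum i)).2⟩

end KasteleynMatrix

section GridGraph

lemma gridGraph_eq_boxProd (m n : ℕ) : gridGraph m n = pathGraph m □ pathGraph n := by
  ext v w
  simp only [gridGraph, fromRel_adj, boxProd_adj, pathGraph_adj, ne_eq, Prod.ext_iff, Fin.ext_iff]
  lia

lemma numPerfectMatchings_gridGraph_comm (m n : ℕ) :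
    numPerfectMatchings (gridGraph m n) = numPerfectMatchings (gridGraph n m) := by
  simp_rw [gridGraph_eq_boxProd]
  exact numPerfectMatchings_congr (boxProdComm _ _)

lemma numPerfectMatchings_gridGraph_of_odd {m n : ℕ} (hm : Odd m) (hn : Odd n) :
    numPerfectMatchings (gridGraph m n) = 0 :=
  numPerfectMatchings_eq_zero_of_odd_card _ (by simpa using hm.mul hn)

lemma gridGraph_adj_parity {m n : ℕ} {v w : Fin m × Fin n} (h : (gridGraph m n).Adj v w) :
    Even (v.1 + v.2 : ℕ) ↔ ¬ Even (w.1 + w.2 : ℕ) := by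
  simp only [gridGraph_eq_boxProd, boxProd_adj, pathGraph_adj, Fin.ext_iff] at h
  grind

lemma dist_finProdFinEquiv_of_adj {m n : ℕ} {v w : Fin m × Fin n} (h : (gridGraph m n).Adj v w) :
    Nat.dist (finProdFinEquiv v) (finProdFinEquiv w) = 1 ∨
      Nat.dist (finProdFinEquiv v) (finProdFinEquiv w) = n := by
  simp only [gridGraph_eq_boxProd, boxProd_adj, pathGraph_adj] at h
  simp only [finProdFinEquiv_apply_val, Nat.dist]
  rcases h with ⟨h | h, h'⟩ | ⟨h | h, h'⟩
  · right; rw [← h, h', mul_add]; lia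
  · right; rw [← h, h', mul_add]; lia
  · left; rw [h']; lia
  · left; rw [h']; lia

variable (R : Type*) [Ring R]

/-- The skew-symmetric signed adjacency matrix of the path graph. -/
def signedPathMatrix (n : ℕ) : Matrix (Fin n) (Fin n) R :=
  Matrix.of fun i j ↦ if (i + 1 : ℕ) = j then 1 else if (j + 1 : ℕ) = i then -1 else 0

/-- The diagonal matrix with entries `-1, 1, -1, …`. -/
def alternatingMatrix (n : ℕ) : Matrix (Fin n) (Fin n) R :=
  diagonal fun i ↦ (-1) ^ (i + 1 : ℕ)

lemma alternatingMatrix_mul_self (n : ℕ) : alternatingMatrix R n * alternatingMatrix R n = 1 := by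
  simp only [alternatingMatrix, diagonal_mul_diagonal, ← pow_add,
    Even.neg_one_pow (Even.add_self _), diagonal_one]

lemma alternatingMatrix_mul_signedPathMatrix (n : ℕ) :
    alternatingMatrix R n * signedPathMatrix R n =
      -(signedPathMatrix R n * alternatingMatrix R n) := by
  ext i j
  rw [neg_apply, alternatingMatrix, diagonal_mul, mul_diagonal, signedPathMatrix, of_apply]
  split_ifs with h h'
  · simp [← h, pow_succ]
  · simp [← h', pow_succ]
  · simp

lemma map_signedPathMatrix {S : Type*} [Ring S] (f : R →+* S) (n : ℕ) :
    (signedPathMatrix R n).map f = signedPathMatrix S n := by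
  ext i j
  simp [signedPathMatrix, apply_ite f]

lemma one_kronecker_add_kronecker_alternating_mul_self {S : Type*} [CommRing S] (m n : ℕ) :
    ((1 : Matrix (Fin m) (Fin m) S) ⊗ₖ signedPathMatrix S n +
        signedPathMatrix S m ⊗ₖ alternatingMatrix S n) *
      (1 ⊗ₖ signedPathMatrix S n + signedPathMatrix S m ⊗ₖ alternatingMatrix S n) =
      1 ⊗ₖ (signedPathMatrix S n * signedPathMatrix S n) +
        (signedPathMatrix S m * signedPathMatrix S m) ⊗ₖ 1 := by
  simp only [add_mul, mul_add, ← mul_kronecker_mul, Matrix.one_mul, Matrix.mul_one,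
    alternatingMatrix_mul_self, alternatingMatrix_mul_signedPathMatrix]
  rw [← neg_one_smul S, kronecker_smul]
  module

lemma kasteleynWeight_of_horizontal {m n : ℕ} (r : Fin m) {c c' : Fin n} (h : (c + 1 : ℕ) = c') :
    kasteleynWeight (finProdFinEquiv (r, c)) (finProdFinEquiv (r, c')) = 1 := by
  have lt : finProdFinEquiv (r, c) < finProdFinEquiv (r, c') := by
    simp [Fin.lt_def, ← h]
  have dist_eq : Nat.dist (finProdFinEquiv (r, c)) (finProdFinEquiv (r, c')) = 1 := by
    rw [Nat.dist_eq_sub_of_le lt.le]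
    simp only [finProdFinEquiv_apply_val]
    lia
  rw [kasteleynWeight, orderSign_of_lt lt, arcWeight, if_pos dist_eq, one_mul]

lemma kasteleynWeight_of_vertical {m n : ℕ} (hn : Even n) {r r' : Fin m} (h : (r + 1 : ℕ) = r')
    (c : Fin n) :
    kasteleynWeight (finProdFinEquiv (r, c)) (finProdFinEquiv (r', c)) = (-1) ^ (c + 1 : ℕ) := by
  have lt : finProdFinEquiv (r, c) < finProdFinEquiv (r', c) := by
    simp [Fin.lt_def, ← h, c.pos]
  have dist_ne : Nat.dist (finProdFinEquiv (r, c)) (finProdFinEquiv (r', c)) ≠ 1 := by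
    rw [Nat.dist_eq_sub_of_le lt.le]
    simp only [finProdFinEquiv_apply_val, ← h, mul_add, mul_one]
    grind
  rw [kasteleynWeight, orderSign_of_lt lt, arcWeight, if_neg dist_ne,
    max_eq_right (Fin.le_def.1 lt.le), one_mul, finProdFinEquiv_apply_val,
    add_right_comm, pow_add, (hn.mul_right r').neg_one_pow, mul_one]

lemma kasteleynMatrix_gridGraph (m : ℕ) {n : ℕ} [DecidableRel (gridGraph m n).Adj]
    (hn : Even n) :
    kasteleynMatrix (gridGraph m n) finProdFinEquiv =
      1 ⊗ₖ signedPathMatrix ℤ n + signedPathMatrix ℤ m ⊗ₖ alternatingMatrix ℤ n := by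
  ext ⟨r, c⟩ ⟨r', c'⟩
  rw [Matrix.add_apply, kroneckerMap_apply, kroneckerMap_apply, signedPathMatrix, signedPathMatrix,
    of_apply, of_apply, alternatingMatrix, one_apply, diagonal_apply]
  by_cases h : (gridGraph m n).Adj (r, c) (r', c')
  · rw [kasteleynMatrix_apply_of_adj h]
    simp only [gridGraph_eq_boxProd, boxProd_adj, pathGraph_adj] at h
    rcases h with ⟨h | h, rfl⟩ | ⟨h | h, rfl⟩
    · rw [kasteleynWeight_of_vertical hn h]
      simp [h]
    · rw [kasteleynWeight_antisymm, kasteleynWeight_of_vertical hn h]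
      simp [← h, add_assoc]
    · rw [kasteleynWeight_of_horizontal r h]
      simp [h]
    · rw [kasteleynWeight_antisymm, kasteleynWeight_of_horizontal r h]
      simp [← h, add_assoc]
  · rw [kasteleynMatrix_apply_of_not_adj h]
    simp only [gridGraph_eq_boxProd, boxProd_adj, pathGraph_adj] at h
    grind

lemma numPerfectMatchings_gridGraph_pow_four_eq_det (m : ℕ) {n : ℕ} (hn : Even n) :
    (numPerfectMatchings (gridGraph m n) : ℤ) ^ 4 =
      (1 ⊗ₖ (signedPathMatrix ℤ n * signedPathMatrix ℤ n) +
        (signedPathMatrix ℤ m * signedPathMatrix ℤ m) ⊗ₖ 1).det := by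
  classical
  have rev_parity (v : Fin m × Fin n) :
      Even (v.1 + Fin.rev v.2 : ℕ) ↔ ¬ Even (v.1 + v.2 : ℕ) := by
    have := v.2.val_rev
    grind
  obtain ⟨k, e, hl, hr⟩ := exists_equiv_sum_of_swap (fun v : Fin m × Fin n ↦ Even (v.1 + v.2 : ℕ))
    (Equiv.prodCongr (Equiv.refl _) Fin.revPerm) rev_parity
  rw [numPerfectMatchings_pow_four_eq_det e (fun i j h ↦ (gridGraph_adj_parity h).1 (hl i) (hl j))
    (fun i j h ↦ hr i ((gridGraph_adj_parity h).2 (hr j))) fun _ _ ↦ dist_finProdFinEquiv_of_adj,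
    kasteleynMatrix_gridGraph m hn, one_kronecker_add_kronecker_alternating_mul_self]

end GridGraph

section Spectrum

lemma signedPathMatrix_mulVec {R : Type*} [Ring R] {n : ℕ} {g : ℕ → R} (h_zero : g 0 = 0)
    (h_last : g (n + 1) = 0) :
    signedPathMatrix R n *ᵥ (fun i : Fin n ↦ g (i + 1)) =
      fun i : Fin n ↦ g (i + 2) - g i := by
  ext i
  have next : ∑ j : Fin n, (if (i + 1 : ℕ) = j then g (j + 1) else 0) = g (i + 2) := by
    rw [Fin.sum_univ_eq_sum_range (fun j ↦ if (i + 1 : ℕ) = j then g (j + 1) else 0),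
      sum_ite_eq]
    split_ifs with h
    · rfl
    · rw [show (i + 2 : ℕ) = n + 1 by grind, h_last]
  have previous : ∑ j : Fin n, (if (j + 1 : ℕ) = i then g (j + 1) else 0) = g i := by
    rw [Fin.sum_univ_eq_sum_range (fun j ↦ if (j + 1 : ℕ) = i then g (j + 1) else 0)]
    rcases h : (i : ℕ) with _ | k
    · simp [h_zero]
    · simp_rw [Nat.add_right_cancel_iff]
      rw [sum_ite_eq', if_pos (by grind)]
  rw [← next, ← previous, mulVec, dotProduct, ← sum_sub_distrib]
  refine sum_congr rfl fun j _ ↦ ?_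
  rw [signedPathMatrix, of_apply]
  split_ifs <;> first | lia | simp

/-- The standing wave of frequency `θ` on the path, twisted by powers of `I` so that the signs of
`signedPathMatrix` turn into those of the usual adjacency matrix. -/
noncomputable def pathWave (θ : ℂ) (k : ℕ) : ℂ := Complex.I ^ k * Complex.sin (k * θ)

lemma pathWave_add_two_sub (θ : ℂ) (k : ℕ) :
    pathWave θ (k + 2) - pathWave θ k = 2 * Complex.I * Complex.cos θ * pathWave θ (k + 1) := by
  have sin_recurrence : Complex.sin ((k + 2 : ℕ) * θ) + Complex.sin (k * θ) =
      2 * Complex.cos θ * Complex.sin ((k + 1 : ℕ) * θ) := by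
    rw [show ((k + 2 : ℕ) : ℂ) * θ = (k + 1 : ℕ) * θ + θ by push_cast; ring,
      show (k : ℂ) * θ = (k + 1 : ℕ) * θ - θ by push_cast; ring, Complex.sin_add, Complex.sin_sub]
    ring
  simp only [pathWave, pow_add, pow_one, Complex.I_sq]
  linear_combination -Complex.I ^ k * sin_recurrence -
    2 * Complex.cos θ * Complex.I ^ k * Complex.sin ((k + 1 : ℕ) * θ) * Complex.I_sq

/-- The `k`-th frequency of the path graph on `n` vertices, for `1 ≤ k ≤ n`. -/
noncomputable def pathAngle (n k : ℕ) : ℝ := π * k / (n + 1)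

lemma pathAngle_pos (n k : ℕ) : 0 < pathAngle n (k + 1) := by unfold pathAngle; positivity

lemma pathAngle_lt_pi {n k : ℕ} (h : k < n + 1) : pathAngle n k < π := by
  have : (k : ℝ) < n + 1 := mod_cast h
  rw [pathAngle, div_lt_iff₀ (by positivity)]
  gcongr

lemma pathWave_pathAngle_last (n k : ℕ) : pathWave (pathAngle n k) (n + 1) = 0 := by
  have angle : ((n + 1 : ℕ) : ℂ) * pathAngle n k = k * π := by
    have : (n + 1 : ℂ) ≠ 0 := mod_cast n.succ_ne_zero
    push_cast [pathAngle]
    field_simp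
  rw [pathWave, angle, Complex.sin_nat_mul_pi, mul_zero]

lemma pathWave_pathAngle_one_ne_zero {n k : ℕ} (h : k < n) :
    pathWave (pathAngle n (k + 1)) 1 ≠ 0 := by
  have : Real.sin (pathAngle n (k + 1)) ≠ 0 :=
    (sin_pos_of_pos_of_lt_pi (pathAngle_pos n k) (pathAngle_lt_pi (by lia))).ne'
  simpa [pathWave, ← Complex.ofReal_sin] using this

/-- The eigenvalue of `signedPathMatrix ℂ n` at the `k`-th standing wave. -/
noncomputable def pathEigenvalue (n k : ℕ) : ℂ := 2 * Complex.I * Complex.cos (pathAngle n k)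

lemma pathEigenvalue_injective (n : ℕ) :
    Function.Injective fun k : Fin n ↦ pathEigenvalue n (k + 1) := by
  intro j k h
  have cos_eq : Real.cos (pathAngle n (j + 1)) = Real.cos (pathAngle n (k + 1)) := by
    simpa [pathEigenvalue, ← Complex.ofReal_cos] using h
  have angle_mem (i : Fin n) : pathAngle n (i + 1) ∈ Set.Icc 0 π :=
    ⟨(pathAngle_pos n i).le, (pathAngle_lt_pi (by lia)).le⟩
  have angle_eq := injOn_cos (angle_mem j) (angle_mem k) cos_eq
  have : (n + 1 : ℝ) ≠ 0 := mod_cast n.succ_ne_zero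
  rw [pathAngle, pathAngle, div_left_inj' this, mul_right_inj' pi_ne_zero] at angle_eq
  exact Fin.ext (by simpa using angle_eq)

/-- The matrix whose columns are the standing waves on the path graph. -/
noncomputable def pathWaveMatrix (n : ℕ) : Matrix (Fin n) (Fin n) ℂ :=
  Matrix.of fun i k ↦ pathWave (pathAngle n (k + 1)) (i + 1)

lemma signedPathMatrix_mulVec_col_pathWaveMatrix (n : ℕ) (k : Fin n) :
    signedPathMatrix ℂ n *ᵥ (pathWaveMatrix n).col k =
      pathEigenvalue n (k + 1) • (pathWaveMatrix n).col k :=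
  (signedPathMatrix_mulVec (by simp [pathWave]) (pathWave_pathAngle_last n (k + 1))).trans
    (funext fun i ↦ pathWave_add_two_sub _ i)

lemma signedPathMatrix_mul_pathWaveMatrix (n : ℕ) :
    signedPathMatrix ℂ n * pathWaveMatrix n =
      pathWaveMatrix n * diagonal fun k : Fin n ↦ pathEigenvalue n (k + 1) := by
  ext i k
  rw [mul_diagonal, mul_comm (pathWaveMatrix n i k)]
  exact congrFun (signedPathMatrix_mulVec_col_pathWaveMatrix n k) i

lemma det_pathWaveMatrix_ne_zero (n : ℕ) : (pathWaveMatrix n).det ≠ 0 := by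
  have independent : LinearIndependent ℂ (pathWaveMatrix n).col := by
    refine Module.End.eigenvectors_linearIndependent' (toLin' (signedPathMatrix ℂ n)) _
      (pathEigenvalue_injective n) _ fun k ↦ ⟨?_, fun h ↦ ?_⟩
    · rw [Module.End.mem_eigenspace_iff, toLin'_apply]
      exact signedPathMatrix_mulVec_col_pathWaveMatrix n k
    · exact pathWave_pathAngle_one_ne_zero k.2 (congrFun h ⟨0, k.pos⟩)
  rw [linearIndependent_cols_iff_isUnit, isUnit_iff_isUnit_det] at independent
  exact independent.ne_zero

lemma sq_mul_eq_mul_diagonal {ι R : Type*} [Fintype ι] [DecidableEq ι] [CommRing R]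
    {A P : Matrix ι ι R} {a : ι → R} (h : A * P = P * diagonal a) :
    A * A * P = P * diagonal (a ^ 2) := by
  rw [Matrix.mul_assoc, h, ← Matrix.mul_assoc, h, Matrix.mul_assoc, ← sq, diagonal_pow]

lemma map_kronecker {ι κ R S : Type*} [Ring R] [Ring S] (f : R →+* S) (A : Matrix ι ι R)
    (B : Matrix κ κ R) : (A ⊗ₖ B).map f = A.map f ⊗ₖ B.map f := by
  ext
  exact map_mul f _ _

lemma det_one_kronecker_add_kronecker_one {ι κ R : Type*} [Fintype ι] [DecidableEq ι] [Fintype κ]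
    [DecidableEq κ] [CommRing R] [IsDomain R] {A P : Matrix ι ι R} {B Q : Matrix κ κ R}
    {a : ι → R} {b : κ → R} (hA : A * P = P * diagonal a) (hB : B * Q = Q * diagonal b)
    (hP : P.det ≠ 0) (hQ : Q.det ≠ 0) :
    (1 ⊗ₖ B + A ⊗ₖ 1).det = ∏ i, ∏ j, (a i + b j) := by
  have diagonalize : (1 ⊗ₖ B + A ⊗ₖ 1) * (P ⊗ₖ Q) =
      (P ⊗ₖ Q) * diagonal fun p ↦ a p.1 + b p.2 := by
    rw [add_mul, ← mul_kronecker_mul, ← mul_kronecker_mul, hA, hB, Matrix.one_mul, Matrix.one_mul]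
    ext ⟨i, j⟩ ⟨i', j'⟩
    simp only [Matrix.add_apply, kroneckerMap_apply, mul_diagonal]
    ring
  have det_ne_zero : (P ⊗ₖ Q).det ≠ 0 := by
    rw [det_kronecker]
    exact mul_ne_zero (pow_ne_zero _ hP) (pow_ne_zero _ hQ)
  refine mul_right_cancel₀ det_ne_zero ?_
  rw [← det_mul, diagonalize, det_mul, det_diagonal, Fintype.prod_prod_type, mul_comm]

/-- The absolute value of the square of `pathEigenvalue n k`. -/
noncomputable def pathEigenvalueSq (n k : ℕ) : ℝ := 4 * Real.cos (pathAngle n k) ^ 2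

lemma pathEigenvalue_sq (n k : ℕ) : pathEigenvalue n k ^ 2 = -pathEigenvalueSq n k := by
  rw [pathEigenvalue, pathEigenvalueSq, mul_pow, mul_pow, Complex.I_sq]
  push_cast
  ring

lemma det_one_kronecker_add_signedPathMatrix_sq (m : ℕ) {n : ℕ} (hn : Even n) :
    (1 ⊗ₖ (signedPathMatrix ℂ n * signedPathMatrix ℂ n) +
      (signedPathMatrix ℂ m * signedPathMatrix ℂ m) ⊗ₖ 1).det =
      ∏ j : Fin m, ∏ k : Fin n, (pathEigenvalueSq m (j + 1) + pathEigenvalueSq n (k + 1) : ℂ) := by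
  rw [det_one_kronecker_add_kronecker_one
    (sq_mul_eq_mul_diagonal (signedPathMatrix_mul_pathWaveMatrix m))
    (sq_mul_eq_mul_diagonal (signedPathMatrix_mul_pathWaveMatrix n))
    (det_pathWaveMatrix_ne_zero m) (det_pathWaveMatrix_ne_zero n)]
  simp_rw [Pi.pow_apply, pathEigenvalue_sq, ← neg_add, prod_neg, card_univ, Fintype.card_fin,
    hn.neg_one_pow, one_mul]

lemma numPerfectMatchings_gridGraph_pow_four (m : ℕ) {n : ℕ} (hn : Even n) :
    (numPerfectMatchings (gridGraph m n) : ℝ) ^ 4 =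
      ∏ j : Fin m, ∏ k : Fin n, (pathEigenvalueSq m (j + 1) + pathEigenvalueSq n (k + 1)) := by
  have det_eq := congrArg (Int.castRingHom ℂ) (numPerfectMatchings_gridGraph_pow_four_eq_det m hn)
  have map_one (l : ℕ) : (1 : Matrix (Fin l) (Fin l) ℤ).map (Int.castRingHom ℂ) = 1 :=
    Matrix.map_one _ (RingHom.map_zero _) (RingHom.map_one _)
  rw [RingHom.map_det, RingHom.mapMatrix_apply, Matrix.map_add _ (RingHom.map_add _),
    map_kronecker, map_kronecker, Matrix.map_mul, Matrix.map_mul, map_signedPathMatrix,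
    map_signedPathMatrix, map_one, map_one, det_one_kronecker_add_signedPathMatrix_sq m hn,
    eq_intCast] at det_eq
  exact_mod_cast det_eq

end Spectrum

section Folding

lemma pathEigenvalueSq_nonneg (n k : ℕ) : 0 ≤ pathEigenvalueSq n k := by
  unfold pathEigenvalueSq
  positivity

lemma pathEigenvalueSq_reflect {n k : ℕ} (h : k ≤ n + 1) :
    pathEigenvalueSq n (n + 1 - k) = pathEigenvalueSq n k := by
  have angle : pathAngle n (n + 1 - k) = π - pathAngle n k := by
    rw [pathAngle, pathAngle, Nat.cast_sub h]
    push_cast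
    field_simp
  rw [pathEigenvalueSq, angle, Real.cos_pi_sub, neg_sq, pathEigenvalueSq]

lemma pathEigenvalueSq_middle {n k : ℕ} (h : 2 * k = n + 1) : pathEigenvalueSq n k = 0 := by
  have angle : pathAngle n k = π / 2 := by
    have : (n + 1 : ℝ) = 2 * k := mod_cast h.symm
    have : (k : ℝ) ≠ 0 := by rintro h'; norm_cast at h'; lia
    rw [pathAngle, ‹(n + 1 : ℝ) = 2 * k›]
    field_simp
  rw [pathEigenvalueSq, angle, Real.cos_pi_div_two]
  ring

lemma prod_two_mul_neg_cos_pathAngle (n : ℕ) :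
    ∏ k ∈ range n, 2 * -Real.cos (pathAngle n (k + 1)) =
      (Polynomial.Chebyshev.U ℝ n).eval 0 := by
  have roots_eq : (Polynomial.Chebyshev.U ℝ n).roots =
      (range n).val.map fun k ↦ Real.cos (pathAngle n (k + 1)) := by
    have nodup := Polynomial.Chebyshev.roots_U_real_nodup n
    rw [Polynomial.Chebyshev.roots_U_real, image_val, range_val, Multiset.dedup_eq_self.mpr nodup]
    simp [pathAngle, mul_comm]
  have splits : (Polynomial.Chebyshev.U ℝ n).Splits := by
    rw [Polynomial.splits_iff_card_roots, Polynomial.Chebyshev.natDegree_U_natCast, roots_eq,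
      Multiset.card_map, card_val, card_range]
  rw [splits.eval_eq_prod_roots, Polynomial.Chebyshev.leadingCoeff_U_natCast, roots_eq,
    Multiset.map_map, prod_mul_distrib, prod_const, card_range]
  simp [prod_eq_multiset_prod]

lemma prod_fin_eq_prod_Icc {M : Type*} [CommMonoid M] (f : ℕ → M) (n : ℕ) :
    ∏ k : Fin n, f (k + 1) = ∏ k ∈ Icc 1 n, f k := by
  rw [Fin.prod_univ_eq_prod_range (fun k ↦ f (k + 1)), range_eq_Ico, prod_Ico_add' f]
  rfl

lemma prod_pathEigenvalueSq {n : ℕ} (hn : Even n) : ∏ k ∈ Icc 1 n, pathEigenvalueSq n k = 1 := by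
  rw [← prod_fin_eq_prod_Icc, Fin.prod_univ_eq_prod_range (fun k ↦ pathEigenvalueSq n (k + 1))]
  have eval_sq : (Polynomial.Chebyshev.U ℝ n).eval 0 ^ 2 = 1 := by
    rw [Polynomial.Chebyshev.U_eval_zero_of_even _ (mod_cast hn)]
    norm_cast
    simp
  rw [← eval_sq, ← prod_two_mul_neg_cos_pathAngle, ← prod_pow]
  refine prod_congr rfl fun k _ ↦ ?_
  rw [pathEigenvalueSq]
  ring

lemma sq_prod_Icc_half {M : Type*} [CommMonoid M] {f : ℕ → M} {n : ℕ}
    (reflect : ∀ k ≤ n + 1, f (n + 1 - k) = f k) (middle : ∀ k, 2 * k = n + 1 → f k = 1) :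
    (∏ k ∈ Icc 1 ((n + 1) / 2), f k) ^ 2 = ∏ k ∈ Icc 1 n, f k := by
  have reflected : ∏ k ∈ Ico 1 ((n + 1) / 2 + 1), f k =
      ∏ k ∈ Ico (n + 1 - (n + 1) / 2) (n + 1), f k := by
    rw [← prod_congr rfl fun k hk ↦ reflect k (by grind), prod_Ico_reflect _ _ (by lia)]
    congr 2
    lia
  have from_middle : ∏ k ∈ Ico (n + 1 - (n + 1) / 2) (n + 1), f k =
      ∏ k ∈ Ico ((n + 1) / 2 + 1) (n + 1), f k := by
    rcases Nat.even_or_odd' (n + 1) with ⟨h, n_eq | n_eq⟩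
    · rw [prod_eq_prod_Ico_succ_bot (by lia), middle _ (by lia), one_mul]
      congr 2
      lia
    · congr 2
      lia
  rw [← Ico_add_one_right_eq_Icc, ← Ico_add_one_right_eq_Icc,
    ← prod_Ico_consecutive f (show 1 ≤ (n + 1) / 2 + 1 by lia)
      (show (n + 1) / 2 + 1 ≤ n + 1 by lia), ← from_middle, ← reflected, sq]

lemma prod_half_pathEigenvalueSq {n : ℕ} (hn : Even n) :
    ∏ k ∈ Icc 1 ((n + 1) / 2), pathEigenvalueSq n k = 1 := by
  refine (pow_eq_one_iff_of_nonneg (prod_nonneg fun k _ ↦ pathEigenvalueSq_nonneg n k)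
    two_ne_zero).mp ?_
  rw [sq_prod_Icc_half (fun k ↦ pathEigenvalueSq_reflect) (by grind), prod_pathEigenvalueSq hn]

lemma pow_four_prod_pathEigenvalueSq_add (m : ℕ) {n : ℕ} (hn : Even n) :
    (∏ j ∈ Icc 1 ((m + 1) / 2), ∏ k ∈ Icc 1 ((n + 1) / 2),
      (pathEigenvalueSq m j + pathEigenvalueSq n k)) ^ 4 =
      ∏ j ∈ Icc 1 m, ∏ k ∈ Icc 1 n, (pathEigenvalueSq m j + pathEigenvalueSq n k) := by
  have fold_columns (j : ℕ) : (∏ k ∈ Icc 1 ((n + 1) / 2),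
      (pathEigenvalueSq m j + pathEigenvalueSq n k)) ^ 2 =
        ∏ k ∈ Icc 1 n, (pathEigenvalueSq m j + pathEigenvalueSq n k) :=
    sq_prod_Icc_half (fun k hk ↦ by rw [pathEigenvalueSq_reflect hk]) (by grind)
  have fold_rows : (∏ j ∈ Icc 1 ((m + 1) / 2), ∏ k ∈ Icc 1 ((n + 1) / 2),
      (pathEigenvalueSq m j + pathEigenvalueSq n k)) ^ 2 =
        ∏ j ∈ Icc 1 m, ∏ k ∈ Icc 1 ((n + 1) / 2),
          (pathEigenvalueSq m j + pathEigenvalueSq n k) := by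
    refine sq_prod_Icc_half (fun j hj ↦ by rw [pathEigenvalueSq_reflect hj]) fun j hj ↦ ?_
    simp_rw [pathEigenvalueSq_middle hj, zero_add]
    exact prod_half_pathEigenvalueSq hn
  rw [show 4 = 2 * 2 from rfl, pow_mul, fold_rows, ← prod_pow]
  exact prod_congr rfl fun j _ ↦ fold_columns j

lemma numPerfectMatchings_gridGraph_of_even (m : ℕ) {n : ℕ} (hn : Even n) :
    (numPerfectMatchings (gridGraph m n) : ℝ) =
      ∏ j ∈ Icc 1 ((m + 1) / 2), ∏ k ∈ Icc 1 ((n + 1) / 2),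
        (pathEigenvalueSq m j + pathEigenvalueSq n k) := by
  have product_nonneg : 0 ≤ ∏ j ∈ Icc 1 ((m + 1) / 2), ∏ k ∈ Icc 1 ((n + 1) / 2),
      (pathEigenvalueSq m j + pathEigenvalueSq n k) :=
    prod_nonneg fun j _ ↦ prod_nonneg fun k _ ↦
      add_nonneg (pathEigenvalueSq_nonneg m j) (pathEigenvalueSq_nonneg n k)
  refine (pow_left_inj₀ (Nat.cast_nonneg _) product_nonneg four_ne_zero).mp ?_
  rw [numPerfectMatchings_gridGraph_pow_four m hn, pow_four_prod_pathEigenvalueSq_add m hn,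
    ← prod_fin_eq_prod_Icc]
  exact prod_congr rfl fun j _ ↦ prod_fin_eq_prod_Icc (pathEigenvalueSq m (j + 1) +
    pathEigenvalueSq n ·) n

lemma prod_pathEigenvalueSq_add_of_odd {m n : ℕ} (hm : Odd m) (hn : Odd n) :
    ∏ j ∈ Icc 1 ((m + 1) / 2), ∏ k ∈ Icc 1 ((n + 1) / 2),
      (pathEigenvalueSq m j + pathEigenvalueSq n k) = 0 := by
  refine prod_eq_zero (right_mem_Icc.mpr (by grind)) <|
    prod_eq_zero (right_mem_Icc.mpr (by grind)) ?_
  rw [pathEigenvalueSq_middle (by grind), pathEigenvalueSq_middle (by grind), add_zero]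

end Folding

end Kasteleyn

theorem numPerfectMatchings_eq_prod_general (m n : ℕ) :
    (numPerfectMatchings (gridGraph m n) : ℝ) =
      ∏ j ∈ Finset.Icc 1 ((m + 1) / 2), ∏ k ∈ Finset.Icc 1 ((n + 1) / 2),
        (4 * Real.cos (π * j / (m + 1)) ^ 2 + 4 * Real.cos (π * k / (n + 1)) ^ 2) := by
  change _ = ∏ j ∈ Finset.Icc 1 ((m + 1) / 2), ∏ k ∈ Finset.Icc 1 ((n + 1) / 2),
    (Kasteleyn.pathEigenvalueSq m j + Kasteleyn.pathEigenvalueSq n k)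
  rcases n.even_or_odd with hn | hn
  · exact Kasteleyn.numPerfectMatchings_gridGraph_of_even m hn
  rcases m.even_or_odd with hm | hm
  · rw [Kasteleyn.numPerfectMatchings_gridGraph_comm,
      Kasteleyn.numPerfectMatchings_gridGraph_of_even n hm, Finset.prod_comm]
    simp_rw [add_comm]
  · rw [Kasteleyn.numPerfectMatchings_gridGraph_of_odd hm hn,
      Kasteleyn.prod_pathEigenvalueSq_add_of_odd hm hn, Nat.cast_zero]

/-- Kasteleyn's product formula: for m and n positive even integers, the
number of perfect matchings of the m-by-n grid graph equals
∏_{j=1}^{m/2} ∏_{k=1}^{n/2} (4cos²(πj/(m+1)) + 4cos²(πk/(n+1))). -/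
theorem numPerfectMatchings_eq_prod (m n : ℕ) (hm : 0 < m) (hn : 0 < n)
    (hme : Even m) (hne : Even n) :
    (numPerfectMatchings (gridGraph m n) : ℝ) =
      ∏ j ∈ Finset.Icc 1 (m / 2), ∏ k ∈ Finset.Icc 1 (n / 2),
        (4 * Real.cos (π * j / (m + 1)) ^ 2 +
          4 * Real.cos (π * k / (n + 1)) ^ 2) := by
  rw [numPerfectMatchings_eq_prod_general, Nat.succ_div_of_not_dvd (by grind),
    Nat.succ_div_of_not_dvd (by grind)]
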